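/- Let 0 < δ < 1, ε > 0, p ∈ {1,…,d}, and set V = 2(tr(A) + 4A_{p,p})² + ‖A + Aᵀ‖² + 8‖A_{p,:} + A_{:,p}‖² − 12A_{p,p}². If the sample size N (a positive integer) satisfies N ≥ V/(4δε²), then with probability at least 1 − δ the estimator satisfies A_{p,p} − ε ≤ g_p ≤ A_{p,p} + ε. -/

import Mathlib

open MeasureTheory ProbabilityTheory Finset

noncomputable def stdGaussianVec (d : ℕ) : Measure (Fin d → ℝ) :=
  Measure.pi fun _ => gaussianReal 0 1

def quadForm {d : ℕ} (A : Matrix (Fin d) (Fin d) ℝ) (u : Fin d → ℝ) : ℝ :=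
  ∑ i, ∑ j, A i j * u i * u j

/-!
Gaussian integration by parts gives `E[u_i q(u)] = E[∂_i q(u)]` for every polynomial `q`, hence
`E[(uᵀ A u) q(u)] = tr A * E[q(u)] + ∑ i j, A i j * E[∂_j ∂_i q(u)]`. Used once with
`q = (u_p² - 1) / 2`, this identity shows that a single-sample estimator has mean `A p p`; used
twice on `(uᵀ A u)² (u_p² - 1)² / 4`, it gives the second moment, and the variance is `V / 4`. The
mean of `N` independent copies has variance `V / (4 N)`, and Chebyshev's inequality concludes.
-/

open scoped NNReal

section Gaussian

variable {m : ℝ} {v : ℝ≥0}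

lemma hasDerivAt_gaussianPDFReal (hv : v ≠ 0) (x : ℝ) :
    HasDerivAt (gaussianPDFReal m v) (-((x - m) / v) * gaussianPDFReal m v x) x := by
  have hv' : (v : ℝ) ≠ 0 := by exact_mod_cast hv
  have hexponent : HasDerivAt (fun x : ℝ ↦ -(x - m) ^ 2 / (2 * v)) (-((x - m) / v)) x := by
    refine ((((hasDerivAt_id x).sub_const m).pow 2).neg.div_const (2 * (v : ℝ))).congr_deriv ?_
    simp only [id]
    field
  refine (hexponent.exp.const_mul _).congr_deriv ?_
  rw [gaussianPDFReal]
  ring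

lemma integrable_gaussianReal_iff (hv : v ≠ 0) {f : ℝ → ℝ} :
    Integrable f (gaussianReal m v) ↔ Integrable fun x ↦ f x * gaussianPDFReal m v x := by
  rw [gaussianReal_of_var_ne_zero _ hv, integrable_withDensity_iff (measurable_gaussianPDF m v)
    (ae_of_all _ fun _ ↦ gaussianPDF_lt_top)]
  simp only [toReal_gaussianPDF]

lemma integral_sub_mul_gaussianReal {f f' : ℝ → ℝ}
    (hf : ∀ x, HasDerivAt f (f' x) x) (hf_int : Integrable f (gaussianReal m v))
    (hf'_int : Integrable f' (gaussianReal m v))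
    (hxf_int : Integrable (fun x ↦ (x - m) * f x) (gaussianReal m v)) :
    ∫ x, (x - m) * f x ∂gaussianReal m v = v * ∫ x, f' x ∂gaussianReal m v := by
  obtain rfl | hv := eq_or_ne v 0
  · simp [gaussianReal_zero_var]
  have hv' : (v : ℝ) ≠ 0 := by exact_mod_cast hv
  rw [integrable_gaussianReal_iff hv] at hf_int hf'_int hxf_int
  have hparts := integral_mul_deriv_eq_deriv_mul_of_integrable (fun x _ ↦ hf x)
    (fun x _ ↦ hasDerivAt_gaussianPDFReal (m := m) hv x)
    ((hxf_int.const_mul (-(v : ℝ)⁻¹)).congr (.of_forall fun x ↦ by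
      simp only [Pi.mul_apply]
      field)) hf'_int hf_int
  simp only [integral_gaussianReal_eq_integral_smul hv, smul_eq_mul]
  calc ∫ x, gaussianPDFReal m v x * ((x - m) * f x)
      = ∫ x, -v * (f x * (-((x - m) / v) * gaussianPDFReal m v x)) := by
        congr with x
        field
    _ = v * ∫ x, gaussianPDFReal m v x * f' x := by
        rw [integral_const_mul, hparts, neg_mul_neg]
        simp only [mul_comm]

lemma integrable_pow_gaussianReal (n : ℕ) : Integrable (fun x ↦ x ^ n) (gaussianReal m v) :=
  integrable_pow_of_mem_interior_integrableExpSet (by simp) n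

lemma integral_pow_succ_gaussianReal (n : ℕ) :
    ∫ x, x ^ (n + 1) ∂gaussianReal m v =
      m * ∫ x, x ^ n ∂gaussianReal m v + v * n * ∫ x, x ^ (n - 1) ∂gaussianReal m v := by
  have hsplit (x : ℝ) : (x - m) * x ^ n = x ^ (n + 1) - m * x ^ n := by ring
  have hstein := integral_sub_mul_gaussianReal (m := m) (v := v)
    (hasDerivAt_pow n) (integrable_pow_gaussianReal n)
    ((integrable_pow_gaussianReal (n - 1)).const_mul n)
    (((integrable_pow_gaussianReal (n + 1)).sub
      ((integrable_pow_gaussianReal n).const_mul m)).congr (.of_forall fun x ↦ (hsplit x).symm))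
  simp only [hsplit] at hstein
  rw [integral_sub (integrable_pow_gaussianReal _) ((integrable_pow_gaussianReal _).const_mul m),
    integral_const_mul, integral_const_mul] at hstein
  linarith

end Gaussian

section Chebyshev

variable {Ω : Type*} [MeasurableSpace Ω] {μ : Measure Ω} [IsProbabilityMeasure μ]

lemma ofReal_one_sub_variance_div_sq_le_meas {X : Ω → ℝ} (hX : MemLp X 2 μ) {c : ℝ} (hc : 0 < c) :
    ENNReal.ofReal (1 - Var[X; μ] / c ^ 2) ≤ μ {ω | |X ω - μ[X]| < c} := by
  have hcompl : {ω | |X ω - μ[X]| < c}ᶜ = {ω | c ≤ |X ω - μ[X]|} := by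
    ext ω
    simp
  rw [ENNReal.ofReal_sub _ (div_nonneg (variance_nonneg X μ) (sq_nonneg c)), ENNReal.ofReal_one,
    tsub_le_iff_right]
  calc 1 = μ Set.univ := measure_univ.symm
    _ ≤ μ {ω | |X ω - μ[X]| < c} + μ {ω | |X ω - μ[X]| < c}ᶜ := measure_univ_le_add_compl _
    _ ≤ _ := by
        rw [hcompl]
        gcongr
        exact meas_ge_le_variance_div_sq hX hc

variable {ι : Type*} [Fintype ι] {f : Ω → ℝ}

lemma memLp_sum_eval_pi {q : ENNReal} (hf : MemLp f q μ) :
    MemLp (fun w : ι → Ω ↦ ∑ j, f (w j)) q (Measure.pi fun _ ↦ μ) :=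
  memLp_finsetSum _ fun j _ ↦ hf.comp_measurePreserving (measurePreserving_eval (fun _ ↦ μ) j)

lemma integral_mean_pi [Nonempty ι] (hf : Integrable f μ) :
    ∫ w : ι → Ω, (∑ j, f (w j)) / Fintype.card ι ∂Measure.pi (fun _ ↦ μ) = ∫ x, f x ∂μ := by
  have hsum : ∫ w : ι → Ω, ∑ j, f (w j) ∂Measure.pi (fun _ ↦ μ) = Fintype.card ι * ∫ x, f x ∂μ := by
    rw [integral_finsetSum _ fun j _ ↦ integrable_comp_eval (μ := fun _ : ι ↦ μ) hf]
    simp [integral_comp_eval (μ := fun _ : ι ↦ μ) hf.aestronglyMeasurable]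
  rw [integral_div, hsum, mul_div_cancel_left₀ _ (by simp)]

lemma variance_mean_pi [Nonempty ι] (hf : MemLp f 2 μ) :
    Var[fun w : ι → Ω ↦ (∑ j, f (w j)) / Fintype.card ι; Measure.pi fun _ ↦ μ] =
      Var[f; μ] / Fintype.card ι := by
  have hsum : Var[fun w : ι → Ω ↦ ∑ j, f (w j); Measure.pi fun _ ↦ μ] =
      Fintype.card ι * Var[f; μ] := by
    simpa [Finset.sum_fn] using variance_sum_pi (μ := fun _ : ι ↦ μ) (X := fun _ ↦ f) fun _ ↦ hf
  have hcard : (Fintype.card ι : ℝ) ≠ 0 := by simp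
  simp only [div_eq_inv_mul, variance_const_mul, hsum]
  field

lemma ofReal_one_sub_variance_div_le_meas_mean_pi [Nonempty ι] (hf : MemLp f 2 μ) {c : ℝ}
    (hc : 0 < c) :
    ENNReal.ofReal (1 - Var[f; μ] / (Fintype.card ι * c ^ 2)) ≤ Measure.pi (fun _ : ι ↦ μ)
      {w | |(∑ j, f (w j)) / Fintype.card ι - ∫ x, f x ∂μ| < c} := by
  have hmean : MemLp (fun w : ι → Ω ↦ (∑ j, f (w j)) / Fintype.card ι) 2
      (Measure.pi fun _ ↦ μ) := by
    simpa only [div_eq_inv_mul] using (memLp_sum_eval_pi hf).const_mul _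
  have hcheb := ofReal_one_sub_variance_div_sq_le_meas hmean hc
  rwa [variance_mean_pi hf, integral_mean_pi (hf.integrable one_le_two), div_div] at hcheb

end Chebyshev

open MvPolynomial

section PolynomialMoments

variable {ι : Type*} [Fintype ι]

lemma eval_monomial_eq_mul_prod {R : Type*} [CommSemiring R] (s : ι →₀ ℕ) (a : R) (u : ι → R) :
    eval u (monomial s a) = a * ∏ i, u i ^ s i := by
  rw [eval_monomial, Finsupp.prod_fintype _ _ fun i ↦ pow_zero (u i)]

lemma integrable_eval_pi {μ : ι → Measure ℝ} [∀ i, SigmaFinite (μ i)]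
    (hμ : ∀ i n, Integrable (fun x ↦ x ^ n) (μ i)) (q : MvPolynomial ι ℝ) :
    Integrable (fun u ↦ eval u q) (Measure.pi μ) := by
  induction q using MvPolynomial.induction_on' with
  | monomial s a =>
    simp only [eval_monomial_eq_mul_prod]
    exact (Integrable.fintype_prod fun i ↦ hμ i (s i)).const_mul a
  | add q r hq hr =>
    simp only [map_add]
    exact hq.add hr

lemma memLp_two_eval_pi {μ : ι → Measure ℝ} [∀ i, SigmaFinite (μ i)]
    (hμ : ∀ i n, Integrable (fun x ↦ x ^ n) (μ i)) (q : MvPolynomial ι ℝ) :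
    MemLp (fun u ↦ eval u q) 2 (Measure.pi μ) := by
  rw [memLp_two_iff_integrable_sq (integrable_eval_pi hμ q).aestronglyMeasurable]
  exact (integrable_eval_pi hμ (q ^ 2)).congr (.of_forall fun u ↦ map_pow (eval u) q 2)

/-- The expectation of a polynomial in independent Gaussian variables, the `i`-th of mean `m i` and
variance `v i`, as a linear functional, so that sums can be pulled out without integrability side
conditions. -/
noncomputable def gaussianExpectation (m : ι → ℝ) (v : ι → ℝ≥0) : MvPolynomial ι ℝ →ₗ[ℝ] ℝ where
  toFun q := ∫ u, eval u q ∂Measure.pi fun i ↦ gaussianReal (m i) (v i)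
  map_add' q r := by
    simp only [map_add]
    exact integral_add (integrable_eval_pi (fun _ ↦ integrable_pow_gaussianReal) q)
      (integrable_eval_pi (fun _ ↦ integrable_pow_gaussianReal) r)
  map_smul' a q := by
    simp only [smul_eval, RingHom.id_apply, smul_eq_mul, integral_const_mul]

variable (m : ι → ℝ) (v : ι → ℝ≥0)

lemma gaussianExpectation_apply (q : MvPolynomial ι ℝ) :
    gaussianExpectation m v q = ∫ u, eval u q ∂Measure.pi fun i ↦ gaussianReal (m i) (v i) :=
  rfl

lemma variance_eval_pi_gaussianReal (q : MvPolynomial ι ℝ) :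
    Var[fun u ↦ eval u q; Measure.pi fun i ↦ gaussianReal (m i) (v i)] =
      gaussianExpectation m v (q ^ 2) - gaussianExpectation m v q ^ 2 := by
  rw [variance_eq_sub (memLp_two_eval_pi (fun _ ↦ integrable_pow_gaussianReal) q)]
  simp [gaussianExpectation_apply]

lemma gaussianExpectation_one : gaussianExpectation m v 1 = 1 := by
  simp [gaussianExpectation_apply]

lemma gaussianExpectation_monomial (s : ι →₀ ℕ) (a : ℝ) :
    gaussianExpectation m v (monomial s a) =
      a * ∏ i, ∫ x, x ^ s i ∂gaussianReal (m i) (v i) := by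
  simp only [gaussianExpectation_apply, eval_monomial_eq_mul_prod, integral_const_mul]
  rw [integral_fintype_prod_eq_prod (f := fun i (x : ℝ) ↦ x ^ s i)]

lemma gaussianExpectation_X_sub_C_mul (i : ι) (q : MvPolynomial ι ℝ) :
    gaussianExpectation m v ((X i - C (m i)) * q) =
      v i * gaussianExpectation m v (pderiv i q) := by
  classical
  induction q using MvPolynomial.induction_on' with
  | monomial s a =>
    let rest := ∏ j ∈ univ.erase i, ∫ x, x ^ s j ∂gaussianReal (m j) (v j)
    have hfactor (t : ι →₀ ℕ) (b : ℝ) (ht : ∀ j ≠ i, t j = s j) :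
        gaussianExpectation m v (monomial t b) =
          b * (∫ x, x ^ t i ∂gaussianReal (m i) (v i)) * rest := by
      rw [gaussianExpectation_monomial, ← mul_prod_erase _ _ (mem_univ i), ← mul_assoc]
      congr 1
      exact prod_congr rfl fun j hj ↦ by rw [ht j (ne_of_mem_erase hj)]
    have hX : X i * monomial s a = monomial (s + Finsupp.single i 1) a := by
      rw [mul_comm, X, monomial_mul, mul_one]
    have hsingle (j : ι) (hj : j ≠ i) : Finsupp.single i 1 j = 0 := Finsupp.single_eq_of_ne hj
    calc gaussianExpectation m v ((X i - C (m i)) * monomial s a)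
        = gaussianExpectation m v (monomial (s + Finsupp.single i 1) a) -
            m i * gaussianExpectation m v (monomial s a) := by
          rw [sub_mul, map_sub, hX, ← smul_eq_C_mul, map_smul, smul_eq_mul]
      _ = v i * gaussianExpectation m v (monomial (s - Finsupp.single i 1) (a * s i)) := by
          rw [hfactor _ _ fun j hj ↦ by simp [hsingle j hj], hfactor s _ fun _ _ ↦ rfl,
            hfactor _ _ fun j hj ↦ by simp [hsingle j hj], Finsupp.add_apply, Finsupp.tsub_apply,
            Finsupp.single_eq_same, integral_pow_succ_gaussianReal]
          ring
      _ = v i * gaussianExpectation m v (pderiv i (monomial s a)) := by rw [pderiv_monomial]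
  | add q r hq hr => simp only [mul_add, map_add, hq, hr]

end PolynomialMoments

section QuadraticPolynomial

variable {ι R : Type*} [Fintype ι] [CommSemiring R] (A : Matrix ι ι R)

lemma toMvPolynomial_eq_sum_smul_X {κ : Type*} (B : Matrix κ ι R) (i : κ) :
    B.toMvPolynomial i = ∑ j, B i j • X j := by
  simp only [Matrix.toMvPolynomial, ← C_mul_X_eq_monomial, smul_eq_C_mul]

lemma pderiv_toMvPolynomial {κ : Type*} (B : Matrix κ ι R) (i : κ) (j : ι) :
    pderiv j (B.toMvPolynomial i) = C (B i j) := by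
  classical
  simp [toMvPolynomial_eq_sum_smul_X, Pi.single_apply, smul_eq_C_mul]

/-- The quadratic form `uᵀ A u` as a polynomial in the coordinates of `u`. -/
noncomputable def quadPoly : MvPolynomial ι R :=
  ∑ i, X i * A.toMvPolynomial i

lemma eval_quadPoly (u : ι → R) : eval u (quadPoly A) = ∑ i, ∑ j, A i j * u i * u j := by
  simp only [quadPoly, map_sum, map_mul, eval_X, toMvPolynomial_eq_sum_smul_X, smul_eval, mul_sum]
  exact sum_congr rfl fun i _ ↦ sum_congr rfl fun j _ ↦ by ring

lemma pderiv_quadPoly (i : ι) : pderiv i (quadPoly A) = (A + A.transpose).toMvPolynomial i := by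
  classical
  simp only [quadPoly, map_sum, pderiv_mul, pderiv_toMvPolynomial, pderiv_X, Pi.single_apply,
    ite_mul, one_mul, zero_mul, sum_add_distrib, sum_ite_eq', mem_univ, if_true,
    Matrix.toMvPolynomial_add, Pi.add_apply]
  simp [toMvPolynomial_eq_sum_smul_X A.transpose, smul_eq_C_mul, mul_comm]

-- The entry `i p` of the identity matrix stands for the Kronecker delta: as a scalar, unlike an
-- `if`, it passes through derivations and expectations.
lemma pderiv_polynomial_toMvPolynomial {σ : Type*} [DecidableEq σ] (g : Polynomial R) (i p : σ) :
    pderiv i (g.toMvPolynomial p) =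
      (1 : Matrix σ σ R) i p • (Polynomial.derivative g).toMvPolynomial p := by
  simp [Polynomial.toMvPolynomial, Matrix.one_apply, Pi.single_apply, eq_comm]

lemma sum_sum_add_swap_sq :
    ∑ i, ∑ j, (A i j + A j i) ^ 2 = 2 * ∑ i, ∑ j, A i j * (A i j + A j i) := by
  have hswap : ∑ i, ∑ j, A i j * (A i j + A j i) = ∑ i, ∑ j, A j i * (A i j + A j i) := by
    rw [sum_comm]
    simp only [add_comm]
  rw [two_mul]
  nth_rw 2 [hswap]
  simp only [← sum_add_distrib, ← add_mul, sq]

end QuadraticPolynomial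

section StandardGaussian

variable {ι : Type*} [Fintype ι] (A : Matrix ι ι ℝ)

/-- The expectation of a polynomial in independent standard Gaussian variables. -/
noncomputable abbrev stdGaussianExpectation (ι : Type*) [Fintype ι] : MvPolynomial ι ℝ →ₗ[ℝ] ℝ :=
  gaussianExpectation 0 1

lemma stdGaussianExpectation_X_mul (i : ι) (q : MvPolynomial ι ℝ) :
    stdGaussianExpectation ι (X i * q) = stdGaussianExpectation ι (pderiv i q) := by
  simpa using gaussianExpectation_X_sub_C_mul 0 1 i q

lemma stdGaussianExpectation_X_pow_add_two (i : ι) (n : ℕ) :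
    stdGaussianExpectation ι (X i ^ (n + 2)) =
      (n + 1) * stdGaussianExpectation ι (X i ^ n) := by
  have hderiv : pderiv i (X i ^ (n + 1) : MvPolynomial ι ℝ) = ((n : ℝ) + 1) • X i ^ n := by
    simp [smul_eq_C_mul]
  rw [pow_succ', stdGaussianExpectation_X_mul, hderiv, map_smul, smul_eq_mul]

lemma stdGaussianExpectation_X_sq (i : ι) : stdGaussianExpectation ι (X i ^ 2) = 1 := by
  simpa [gaussianExpectation_one] using stdGaussianExpectation_X_pow_add_two i 0

lemma stdGaussianExpectation_X_pow_four (i : ι) : stdGaussianExpectation ι (X i ^ 4) = 3 := by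
  rw [stdGaussianExpectation_X_pow_add_two, stdGaussianExpectation_X_sq]
  norm_num

lemma stdGaussianExpectation_toMvPolynomial_mul {κ : Type*} (B : Matrix κ ι ℝ) (i : κ)
    (q : MvPolynomial ι ℝ) :
    stdGaussianExpectation ι (B.toMvPolynomial i * q) =
      ∑ j, B i j * stdGaussianExpectation ι (pderiv j q) := by
  simp only [toMvPolynomial_eq_sum_smul_X, sum_mul, smul_mul_assoc, map_sum, map_smul,
    stdGaussianExpectation_X_mul, smul_eq_mul]

lemma stdGaussianExpectation_quadPoly_mul (q : MvPolynomial ι ℝ) :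
    stdGaussianExpectation ι (quadPoly A * q) =
      A.trace * stdGaussianExpectation ι q +
        ∑ i, ∑ j, A i j * stdGaussianExpectation ι (pderiv j (pderiv i q)) := by
  have hterm (i : ι) : stdGaussianExpectation ι (X i * A.toMvPolynomial i * q) =
      A i i * stdGaussianExpectation ι q +
        ∑ j, A i j * stdGaussianExpectation ι (pderiv j (pderiv i q)) := by
    rw [mul_assoc, stdGaussianExpectation_X_mul, pderiv_mul, map_add, pderiv_toMvPolynomial,
      ← smul_eq_C_mul, map_smul, smul_eq_mul, stdGaussianExpectation_toMvPolynomial_mul]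
  simp only [quadPoly, sum_mul, map_sum, hterm, sum_add_distrib, Matrix.trace, Matrix.diag_apply]

end StandardGaussian

section DiagonalEstimator

open Polynomial (derivative)

variable {ι : Type*} [Fintype ι] (A : Matrix ι ι ℝ) (p : ι) (g : Polynomial ℝ)

lemma stdGaussianExpectation_toMvPolynomial_mul_toMvPolynomial {κ : Type*}
    (B : Matrix κ ι ℝ) (i : κ) :
    stdGaussianExpectation ι (B.toMvPolynomial i * g.toMvPolynomial p) =
      B i p * stdGaussianExpectation ι ((derivative g).toMvPolynomial p) := by
  classical
  simp only [stdGaussianExpectation_toMvPolynomial_mul, pderiv_polynomial_toMvPolynomial, map_smul]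
  simp [Matrix.one_apply]

lemma stdGaussianExpectation_quadPoly_mul_toMvPolynomial :
    stdGaussianExpectation ι (quadPoly A * g.toMvPolynomial p) =
      A.trace * stdGaussianExpectation ι (g.toMvPolynomial p) +
        A p p * stdGaussianExpectation ι ((derivative^[2] g).toMvPolynomial p) := by
  classical
  simp only [stdGaussianExpectation_quadPoly_mul, pderiv_polynomial_toMvPolynomial,
    Derivation.map_smul, map_smul]
  simp [Matrix.one_apply]

lemma stdGaussianExpectation_pderiv_pderiv_quadPoly_mul_toMvPolynomial [DecidableEq ι] (i j : ι) :
    stdGaussianExpectation ι (pderiv j (pderiv i (quadPoly A * g.toMvPolynomial p))) =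
      (A i j + A j i) * stdGaussianExpectation ι (g.toMvPolynomial p) +
        ((1 : Matrix ι ι ℝ) j p * (A i p + A p i) + (1 : Matrix ι ι ℝ) i p * (A j p + A p j)) *
          stdGaussianExpectation ι ((derivative^[2] g).toMvPolynomial p) +
        (1 : Matrix ι ι ℝ) i p * (1 : Matrix ι ι ℝ) j p *
          stdGaussianExpectation ι (quadPoly A * (derivative^[2] g).toMvPolynomial p) := by
  simp only [pderiv_mul, pderiv_quadPoly, pderiv_polynomial_toMvPolynomial, map_add, map_smul,
    Derivation.map_smul, pderiv_toMvPolynomial, mul_smul_comm, add_mul, smul_add, C_mul',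
    Matrix.add_apply, Matrix.transpose_apply, smul_eq_mul, Function.iterate_succ,
    Function.iterate_zero, Function.comp_apply, id,
    stdGaussianExpectation_toMvPolynomial_mul_toMvPolynomial]
  ring

lemma stdGaussianExpectation_quadPoly_sq_mul_toMvPolynomial :
    stdGaussianExpectation ι (quadPoly A ^ 2 * g.toMvPolynomial p) =
      (A.trace ^ 2 + (∑ i, ∑ j, (A i j + A j i) ^ 2) / 2) *
          stdGaussianExpectation ι (g.toMvPolynomial p) +
        (2 * A.trace * A p p + ∑ i, (A p i + A i p) ^ 2) *
          stdGaussianExpectation ι ((derivative^[2] g).toMvPolynomial p) +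
        A p p ^ 2 * stdGaussianExpectation ι ((derivative^[4] g).toMvPolynomial p) := by
  classical
  have hiter : derivative^[2] (derivative^[2] g) = derivative^[4] g := rfl
  have hsplit (a b c : ι → ι → ℝ) (x y z : ℝ) :
      ∑ i, ∑ j, A i j * (a i j * x + b i j * y + c i j * z) = (∑ i, ∑ j, A i j * a i j) * x +
        (∑ i, ∑ j, A i j * b i j) * y + (∑ i, ∑ j, A i j * c i j) * z := by
    simp only [sum_mul, ← sum_add_distrib, mul_add, mul_assoc]
  have hcross : ∑ i, ∑ j, A i j * ((1 : Matrix ι ι ℝ) j p * (A i p + A p i) +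
      (1 : Matrix ι ι ℝ) i p * (A j p + A p j)) = ∑ i, (A p i + A i p) ^ 2 := by
    simp only [mul_add, sum_add_distrib, Matrix.one_apply, ite_mul, one_mul, zero_mul, mul_ite,
      mul_zero, sum_ite_eq', mem_univ, ↓reduceIte, sum_ite_irrel, sum_const_zero]
    simp only [← sum_add_distrib]
    exact sum_congr rfl fun i _ ↦ by ring
  have hdiag : ∑ i, ∑ j, A i j * ((1 : Matrix ι ι ℝ) i p * (1 : Matrix ι ι ℝ) j p) = A p p := by
    simp [Matrix.one_apply]
  rw [sq, mul_assoc, stdGaussianExpectation_quadPoly_mul]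
  simp only [stdGaussianExpectation_pderiv_pderiv_quadPoly_mul_toMvPolynomial, hsplit, hcross,
    hdiag, stdGaussianExpectation_quadPoly_mul_toMvPolynomial, hiter, sum_sum_add_swap_sq]
  ring

/-- The contribution `uᵀ A u (u_p² - 1) / 2` of a single sample `u` to the estimator `g_p`, as a
polynomial in the coordinates of `u`. -/
noncomputable def diagPoly : MvPolynomial ι ℝ :=
  (1 / 2 : ℝ) • (quadPoly A * (Polynomial.X ^ 2 - 1 : Polynomial ℝ).toMvPolynomial p)

lemma eval_diagPoly (u : ι → ℝ) :
    eval u (diagPoly A p) = (∑ i, ∑ j, A i j * u i * u j) * (u p ^ 2 - 1) / 2 := by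
  rw [diagPoly, smul_eval, map_mul, eval_quadPoly]
  simp only [map_sub, map_pow, Polynomial.toMvPolynomial_X, map_one, eval_X]
  ring

lemma stdGaussianExpectation_diagPoly : stdGaussianExpectation ι (diagPoly A p) = A p p := by
  have hderiv : derivative^[2] (Polynomial.X ^ 2 - 1 : Polynomial ℝ) = (2 : ℝ) • 1 := by
    simp [-Function.iterate_succ, Polynomial.iterate_derivative_X_pow_eq_smul, Nat.descFactorial]
  rw [diagPoly, map_smul, stdGaussianExpectation_quadPoly_mul_toMvPolynomial, hderiv]
  simp only [map_sub, map_pow, Polynomial.toMvPolynomial_X, map_one, map_smul,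
    stdGaussianExpectation_X_sq, gaussianExpectation_one, smul_eq_mul]
  ring

lemma stdGaussianExpectation_diagPoly_sq :
    stdGaussianExpectation ι (diagPoly A p ^ 2) =
      (2 * A.trace ^ 2 + 16 * A.trace * A p p + 24 * A p p ^ 2 +
        (∑ i, ∑ j, (A i j + A j i) ^ 2) + 8 * ∑ i, (A p i + A i p) ^ 2) / 4 := by
  let g : Polynomial ℝ := Polynomial.X ^ 4 - (2 : ℝ) • Polynomial.X ^ 2 + 1
  have hg : (Polynomial.X ^ 2 - 1) ^ 2 = g := by
    simp only [g, ofNat_smul_eq_nsmul]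
    ring
  have hg₂ : derivative^[2] g = (12 : ℝ) • Polynomial.X ^ 2 - (4 : ℝ) • 1 := by
    simp only [g, iterate_map_add, iterate_map_sub, Polynomial.iterate_derivative_X_pow_eq_smul,
      Polynomial.iterate_derivative_smul, Polynomial.iterate_derivative_one two_pos, smul_smul,
      Nat.descFactorial]
    norm_num
  have hg₄ : derivative^[4] g = (24 : ℝ) • 1 := by
    simp [g, -Function.iterate_succ, Polynomial.iterate_derivative_X_pow_eq_smul,
      Polynomial.iterate_derivative_smul, Nat.descFactorial]
  have hsq : diagPoly A p ^ 2 = (1 / 4 : ℝ) • (quadPoly A ^ 2 * g.toMvPolynomial p) := by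
    rw [diagPoly, smul_pow, mul_pow, ← map_pow, hg]
    norm_num
  rw [hsq, map_smul, stdGaussianExpectation_quadPoly_sq_mul_toMvPolynomial, hg₂, hg₄]
  simp only [g, map_add, map_sub, map_smul, map_pow, map_one, Polynomial.toMvPolynomial_X,
    stdGaussianExpectation_X_sq, stdGaussianExpectation_X_pow_four, gaussianExpectation_one,
    smul_eq_mul]
  ring

lemma variance_eval_diagPoly :
    Var[fun u ↦ eval u (diagPoly A p); Measure.pi fun _ ↦ gaussianReal 0 1] =
      (2 * (A.trace + 4 * A p p) ^ 2 + (∑ i, ∑ j, (A i j + A j i) ^ 2) +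
        8 * (∑ i, (A p i + A i p) ^ 2) - 12 * A p p ^ 2) / 4 := by
  refine (variance_eval_pi_gaussianReal 0 1 _).trans ?_
  rw [stdGaussianExpectation_diagPoly_sq, stdGaussianExpectation_diagPoly]
  ring

lemma ofReal_one_sub_le_meas_mean_diagPoly {κ : Type*} [Fintype κ] [Nonempty κ] {ε : ℝ}
    (hε : 0 < ε) :
    ENNReal.ofReal (1 - (2 * (A.trace + 4 * A p p) ^ 2 + (∑ i, ∑ j, (A i j + A j i) ^ 2) +
        8 * (∑ i, (A p i + A i p) ^ 2) - 12 * A p p ^ 2) / (4 * (Fintype.card κ * ε ^ 2))) ≤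
      Measure.pi (fun _ : κ ↦ Measure.pi fun _ : ι ↦ gaussianReal 0 1)
        {w | |(∑ k, eval (w k) (diagPoly A p)) / Fintype.card κ - A p p| < ε} := by
  have hmem : MemLp (fun u ↦ eval u (diagPoly A p)) 2 (Measure.pi fun _ ↦ gaussianReal 0 1) :=
    memLp_two_eval_pi (fun _ ↦ integrable_pow_gaussianReal) _
  have hmean : ∫ u, eval u (diagPoly A p) ∂Measure.pi (fun _ ↦ gaussianReal 0 1) = A p p :=
    stdGaussianExpectation_diagPoly A p
  have hcheb := ofReal_one_sub_variance_div_le_meas_mean_pi (ι := κ) hmem hε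
  rwa [variance_eval_diagPoly, hmean, div_div] at hcheb

end DiagonalEstimator

theorem elementwise_sample_complexity {d : ℕ} (hd : 1 ≤ d)
    (A : Matrix (Fin d) (Fin d) ℝ) (p : Fin d)
    (δ ε : ℝ) (hδ0 : 0 < δ) (hδ1 : δ < 1) (hε : 0 < ε)
    (N : ℕ) (hN : 0 < N)
    (hNge : (N : ℝ) ≥
      (2 * ((∑ i, A i i) + 4 * A p p) ^ 2
        + (∑ i, ∑ j, (A i j + A j i) ^ 2)
        + 8 * (∑ i, (A p i + A i p) ^ 2)
        - 12 * (A p p) ^ 2) / (4 * δ * ε ^ 2)) :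
    ENNReal.ofReal (1 - δ) ≤
      (Measure.pi fun _ : Fin N => stdGaussianVec d)
        {w | A p p - ε ≤
              (1 / (2 * (N : ℝ))) * ∑ j, quadForm A (w j) * ((w j p) ^ 2 - 1)
          ∧ (1 / (2 * (N : ℝ))) * ∑ j, quadForm A (w j) * ((w j p) ^ 2 - 1)
              ≤ A p p + ε} := by
  have : Nonempty (Fin N) := Fin.pos_iff_nonempty.mp hN
  have hδ : (2 * (A.trace + 4 * A p p) ^ 2 + (∑ i, ∑ j, (A i j + A j i) ^ 2) +
      8 * (∑ i, (A p i + A i p) ^ 2) - 12 * A p p ^ 2) / (4 * (N * ε ^ 2)) ≤ δ := by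
    rw [ge_iff_le, div_le_iff₀ (by positivity)] at hNge
    rw [div_le_iff₀ (by positivity)]
    exact hNge.trans_eq (by ring)
  have hconc := ofReal_one_sub_le_meas_mean_diagPoly A p (κ := Fin N) hε
  rw [Fintype.card_fin] at hconc
  refine (ENNReal.ofReal_le_ofReal (by linarith)).trans (hconc.trans (measure_mono fun w hw ↦ ?_))
  have hg : (1 / (2 * (N : ℝ))) * ∑ j, quadForm A (w j) * (w j p ^ 2 - 1) =
      (∑ j, eval (w j) (diagPoly A p)) / N := by
    simp only [eval_diagPoly, quadForm, ← sum_div]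
    field
  have hclose := abs_lt.mp (Set.mem_ofPred_eq ▸ hw)
  rw [Set.mem_ofPred_eq, hg]
  constructor <;> linarith
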